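/- arXiv:1012.4145 — 4 statements merged into one kernel-verified Lean document; each statement's English description precedes it below -/
import Mathlib

section
/- Let x ∈ ℂ with x ∉ {0, −1, −2, …}. Then lim_{r→0⁺} (2π b(r)) · G_{b(r)}(b(r)·x) / (2πr)^x = Γ(x), and the convergence is uniform on compact subsets of ℂ ∖ {0, −1, −2, …}. -/
open Complex Filter Topology

/-- ζ̄_b = exp(−πi/4 − (πi/12)(b² + b^{−2})). -/
noncomputable def zetaBar (b : ℂ) : ℂ :=
  Complex.exp (-(Real.pi * Complex.I) / 4 - (Real.pi * Complex.I) / 12 * (b ^ 2 + b⁻¹ ^ 2))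

/-- The quantum dilogarithm `G_b(x)`, defined for `Im(b²) > 0` by the infinite product
`ζ̄_b · ∏_{n=1}^∞ (1 − e^{2πi b⁻¹(x − n b⁻¹)}) / ∏_{n=0}^∞ (1 − e^{2πi b(x + n b)})`. -/
noncomputable def Gb (b x : ℂ) : ℂ :=
  zetaBar b *
      (∏' n : ℕ, (1 - Complex.exp (2 * Real.pi * Complex.I * b⁻¹ * (x - (n + 1) * b⁻¹)))) /
    (∏' n : ℕ, (1 - Complex.exp (2 * Real.pi * Complex.I * b * (x + n * b))))

/-- `b(r) = e^{iπ/4} √r`, so that `b(r)² = i r`. -/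
noncomputable def br (r : ℝ) : ℂ :=
  Complex.exp (Real.pi * Complex.I / 4) * (Real.sqrt r : ℂ)

/-- The ratio `(1 - e^{-t(x+n+1)}) / (1 - e^{-t(n+1)})`, corrected by a telescoping
exponential factor so that the product over `n` converges uniformly as `t → 0`. -/
noncomputable def qGammaFactor (t : ℝ) (x : ℂ) (n : ℕ) : ℂ :=
  (1 - exp (-(t * (x + (n + 1))))) / (1 - exp (-(t * (n + 1)))) *
    exp (-x * Real.log ((1 - Real.exp (-(t * (n + 2)))) / (1 - Real.exp (-(t * (n + 1))))))

lemma one_sub_exp_neg_pos {s : ℝ} (hs : 0 < s) : 0 < 1 - Real.exp (-s) := by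
  simpa using hs

/-- `t / (e^{t(n+1)} - 1)`, which tends to `1 / (n + 1)` as `t → 0`. -/
noncomputable def qWeight (t : ℝ) (n : ℕ) : ℝ := t / (Real.exp (t * (n + 1)) - 1)

lemma qWeight_bounds {t : ℝ} (ht : 0 < t) (n : ℕ) :
    0 ≤ qWeight t n ∧ qWeight t n ≤ 1 / (n + 1) ∧ qWeight t n * t ≤ 2 / (n + 1) ^ 2 := by
  have hs : 0 < t * (n + 1) := by positivity
  have h1 := Real.add_one_le_exp (t * (n + 1))
  have h2 := Real.quadratic_le_exp_of_nonneg hs.le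
  have hpos : 0 < Real.exp (t * (n + 1)) - 1 := by linarith
  unfold qWeight
  refine ⟨by positivity, ?_, ?_⟩
  · rw [div_le_div_iff₀ hpos (by positivity)]
    linarith
  · rw [div_mul_eq_mul_div, div_le_div_iff₀ hpos (by positivity)]
    nlinarith

lemma one_sub_exp_neg_sub_bound {t M : ℝ} {x : ℂ} (ht : 0 < t) (hx : ‖x‖ ≤ M) (htM : t * M ≤ 1) :
    ‖(1 - exp (-(t * x))) / t - x‖ ≤ t * M ^ 2 := by
  have hn : ‖-(t * x : ℂ)‖ = t * ‖x‖ := by simp [abs_of_pos ht]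
  have h := Complex.norm_exp_sub_one_sub_id_le (x := -(t * x : ℂ)) (by rw [hn]; nlinarith)
  have htc : (t : ℂ) ≠ 0 := by exact_mod_cast ht.ne'
  have e : (1 - exp (-(t * x))) / t - x = -(exp (-(t * x : ℂ)) - 1 - -(t * x)) / t := by
    field_simp
    ring
  rw [e, norm_div, norm_neg, Complex.norm_real, Real.norm_of_nonneg ht.le, div_le_iff₀ ht]
  rw [hn] at h
  have : ‖x‖ ^ 2 ≤ M ^ 2 := by gcongr
  nlinarith [mul_le_mul_of_nonneg_left this (sq_nonneg t)]

lemma ratio_eq_one_add_qWeight {t : ℝ} (ht : 0 < t) (x : ℂ) (n : ℕ) :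
    (1 - exp (-(t * (x + (n + 1))))) / (1 - exp (-(t * (n + 1)))) =
      1 + qWeight t n * ((1 - exp (-(t * x))) / t) := by
  have htc : (t : ℂ) ≠ 0 := by exact_mod_cast ht.ne'
  have hne : exp (t * (n + 1) : ℂ) - 1 ≠ 0 := by
    have : Real.exp (t * (n + 1)) - 1 ≠ 0 := by
      have := Real.add_one_le_exp (t * (n + 1))
      have : 0 < t * (n + 1) := by positivity
      linarith
    exact_mod_cast this
  have he := exp_ne_zero (t * (n + 1) : ℂ)
  simp only [qWeight]
  push_cast
  rw [mul_add, neg_add, Complex.exp_add, Complex.exp_neg (t * (n + 1) : ℂ)]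
  have : (1 - (exp (t * (n + 1) : ℂ))⁻¹) = (exp (t * (n + 1) : ℂ) - 1) / exp (t * (n + 1) : ℂ) := by
    field_simp
  rw [this]
  field_simp
  ring

lemma real_ratio_eq_one_add_qWeight {t : ℝ} (ht : 0 < t) (n : ℕ) :
    (1 - Real.exp (-(t * (n + 2)))) / (1 - Real.exp (-(t * (n + 1)))) =
      1 + qWeight t n * ((1 - Real.exp (-t)) / t) := by
  have := ratio_eq_one_add_qWeight ht 1 n
  rw [show (1 + (n + 1) : ℂ) = n + 2 by ring, mul_one] at this
  exact_mod_cast this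

lemma abs_log_one_add_sub_le {w : ℝ} (hw : 0 ≤ w) : |Real.log (1 + w) - w| ≤ w ^ 2 := by
  have h1 := Real.one_sub_inv_le_log_of_pos (show 0 < 1 + w by linarith)
  have h2 := Real.log_le_sub_one_of_pos (show 0 < 1 + w by linarith)
  have h3 : w - w ^ 2 ≤ 1 - (1 + w)⁻¹ := by
    rw [show 1 - (1 + w)⁻¹ = w / (1 + w) by field_simp; ring, le_div_iff₀ (by linarith)]
    nlinarith [mul_nonneg hw (sq_nonneg w)]
  rw [abs_le]
  constructor <;> nlinarith

lemma norm_qGammaFactor_sub_one_le {t M : ℝ} {x : ℂ} (ht : 0 < t) (hM : 1 ≤ M) (hx : ‖x‖ ≤ M)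
    (htM : t * M ≤ 1) (n : ℕ) :
    ‖qGammaFactor t x n - 1‖ ≤ (3 * M ^ 3 * Real.exp M + 7 * M ^ 2) * (1 / ((n : ℝ) + 1) ^ 2) := by
  obtain ⟨hv0, hv1, hv2⟩ := qWeight_bounds ht n
  rw [qGammaFactor, ratio_eq_one_add_qWeight ht, real_ratio_eq_one_add_qWeight ht]
  set v := qWeight t n
  set E : ℂ := (1 - exp (-(t * x))) / t with hE
  have ht1 : t ≤ 1 := by nlinarith
  have hEx : ‖E - x‖ ≤ t * M ^ 2 := one_sub_exp_neg_sub_bound ht hx htM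
  set e : ℝ := (1 - Real.exp (-t)) / t with he
  have he0 : 0 ≤ e := div_nonneg (one_sub_exp_neg_pos ht).le ht.le
  have he1 : e ≤ 1 := by
    rw [he, div_le_one ht]; linarith [Real.add_one_le_exp (-t)]
  have het : |e - 1| ≤ t := by
    have := one_sub_exp_neg_sub_bound (x := 1) (M := 1) ht (by simp) (by simpa using ht1)
    rw [mul_one, one_pow, mul_one] at this
    rw [← Real.norm_eq_abs, ← Complex.norm_real]
    simpa [he] using this
  set N : ℝ := 1 / ((n : ℝ) + 1) with hN
  have hN0 : 0 < N := by positivity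
  have hN1 : N ≤ 1 := by
    rw [hN, div_le_one (by positivity)]; linarith [Nat.cast_nonneg (α := ℝ) n]
  have hN2 : (1 : ℝ) / ((n : ℝ) + 1) ^ 2 = N ^ 2 := by rw [hN, div_pow, one_pow]
  have hv2' : v * t ≤ 2 * N ^ 2 := by rw [← hN2]; convert hv2 using 1; ring
  rw [hN2]
  set w : ℂ := v * E
  set l : ℝ := Real.log (1 + v * e)
  have hve : 0 ≤ v * e := by positivity
  have hveN : v * e ≤ N := (mul_le_of_le_one_right hv0 he1).trans hv1
  have hl := abs_log_one_add_sub_le hve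
  have hl0 : 0 ≤ l := Real.log_nonneg (by linarith)
  have hlN : l ≤ N := by
    have := Real.log_le_sub_one_of_pos (show 0 < 1 + v * e by linarith)
    linarith
  have hlv : |l - v| ≤ 3 * N ^ 2 := by
    have h1 : |v * e - v| ≤ 2 * N ^ 2 := by
      rw [show v * e - v = v * (e - 1) by ring, abs_mul, abs_of_nonneg hv0]
      exact (mul_le_mul_of_nonneg_left het hv0).trans hv2'
    have h2 : (v * e) ^ 2 ≤ N ^ 2 := by gcongr
    calc |l - v| = |(l - v * e) + (v * e - v)| := by ring_nf
      _ ≤ _ := abs_add_le _ _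
      _ ≤ 3 * N ^ 2 := by linarith
  set y : ℂ := x * l with hy
  have hyn : ‖y‖ ≤ M * N := by
    rw [hy, norm_mul, Complex.norm_real, Real.norm_of_nonneg hl0]
    gcongr
  have hwx : ‖w - v * x‖ ≤ 2 * M ^ 2 * N ^ 2 := by
    rw [show w - v * x = v * (E - x) by simp only [w]; ring, norm_mul, Complex.norm_real,
      Real.norm_of_nonneg hv0]
    calc v * ‖E - x‖ ≤ v * (t * M ^ 2) := by gcongr
      _ = (v * t) * M ^ 2 := by ring
      _ ≤ (2 * N ^ 2) * M ^ 2 := by gcongr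
      _ = _ := by ring
  have hyx : ‖v * x - y‖ ≤ 3 * M ^ 2 * N ^ 2 := by
    rw [show v * x - y = -((l - v : ℝ) : ℂ) * x by simp only [hy]; push_cast; ring, norm_mul,
      norm_neg, Complex.norm_real, Real.norm_eq_abs]
    calc |l - v| * ‖x‖ ≤ (3 * N ^ 2) * M := by gcongr
      _ ≤ (3 * N ^ 2) * M ^ 2 := by gcongr; nlinarith
      _ = _ := by ring
  have hwy : ‖w - y‖ ≤ 5 * M ^ 2 * N ^ 2 := by
    calc ‖w - y‖ = ‖(w - v * x) + (v * x - y)‖ := by ring_nf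
      _ ≤ _ := norm_add_le _ _
      _ ≤ _ := by linarith
  have hEn : ‖E‖ ≤ 2 * M := by
    calc ‖E‖ = ‖(E - x) + x‖ := by ring_nf
      _ ≤ _ := norm_add_le _ _
      _ ≤ 2 * M := by nlinarith
  have hwn : ‖w‖ ≤ 2 * M * N := by
    rw [norm_mul, Complex.norm_real, Real.norm_of_nonneg hv0]
    calc v * ‖E‖ ≤ N * (2 * M) := by gcongr
      _ = _ := by ring
  have hexp : ‖exp (-y) - 1 + y‖ ≤ M ^ 2 * N ^ 2 * Real.exp M := by
    have := Complex.norm_exp_sub_sum_le_norm_mul_exp (-y) 2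
    simp only [Finset.sum_range_succ, Finset.sum_range_zero, pow_zero, pow_one, norm_neg] at this
    norm_num at this
    have hyM : ‖y‖ ≤ M := hyn.trans (by nlinarith)
    calc ‖exp (-y) - 1 + y‖ = ‖exp (-y) - (1 + -y)‖ := by ring_nf
      _ ≤ ‖y‖ ^ 2 * Real.exp ‖y‖ := this
      _ ≤ (M * N) ^ 2 * Real.exp M := by gcongr
      _ = _ := by ring
  have h1w : ‖1 + w‖ ≤ 3 * M := by
    refine (norm_add_le _ _).trans ?_
    rw [norm_one]
    nlinarith
  have key : (1 + w) * exp (-x * l) - 1 =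
      (1 + w) * (exp (-y) - 1 + y) + (w - y) + -(w * y) := by
    rw [hy, neg_mul]; ring
  rw [key]
  refine (norm_add₃_le).trans ?_
  rw [norm_neg, norm_mul, norm_mul]
  have a1 : ‖1 + w‖ * ‖exp (-y) - 1 + y‖ ≤ (3 * M) * (M ^ 2 * N ^ 2 * Real.exp M) := by gcongr
  have a2 : ‖w‖ * ‖y‖ ≤ (2 * M * N) * (M * N) := by gcongr
  nlinarith

lemma exists_eventually_norm_le {α : Type*} {l : Filter α} {t : α → ℝ} {x : α → ℂ} {x₀ : ℂ}
    (ht : Tendsto t l (𝓝[>] 0)) (hx : Tendsto x l (𝓝 x₀)) :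
    ∃ M : ℝ, 1 ≤ M ∧ ∀ᶠ a in l, 0 < t a ∧ ‖x a‖ ≤ M ∧ t a * M ≤ 1 := by
  refine ⟨‖x₀‖ + 1, by simp, ?_⟩
  have h : Tendsto (fun a => t a * (‖x₀‖ + 1)) l (𝓝 0) := by
    simpa using (ht.mono_right nhdsWithin_le_nhds).mul_const (‖x₀‖ + 1)
  filter_upwards [ht.eventually self_mem_nhdsWithin,
    hx.norm.eventually (gt_mem_nhds (lt_add_one _)), h.eventually (gt_mem_nhds one_pos)]
    with a h1 h2 h3 using ⟨h1, h2.le, h3.le⟩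

lemma tendsto_one_sub_exp_neg_div {α : Type*} {l : Filter α} {t : α → ℝ} {x : α → ℂ} {x₀ : ℂ}
    (ht : Tendsto t l (𝓝[>] 0)) (hx : Tendsto x l (𝓝 x₀)) :
    Tendsto (fun a => (1 - exp (-(t a * x a))) / t a) l (𝓝 x₀) := by
  have ht0 : Tendsto t l (𝓝 0) := ht.mono_right nhdsWithin_le_nhds
  obtain ⟨M, -, hev⟩ := exists_eventually_norm_le ht hx
  have hd : Tendsto (fun a => (1 - exp (-(t a * x a))) / t a - x a) l (𝓝 0) := by
    refine squeeze_zero_norm' (a := fun a => t a * M ^ 2) ?_ (by simpa using ht0.mul_const (M ^ 2))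
    filter_upwards [hev] with a ⟨h1, h2, h3⟩ using one_sub_exp_neg_sub_bound h1 h2 h3
  simpa using hd.add hx

lemma tendsto_real_one_sub_exp_neg_div {α : Type*} {l : Filter α} {t : α → ℝ}
    (ht : Tendsto t l (𝓝[>] 0)) :
    Tendsto (fun a => (1 - Real.exp (-(t a))) / t a) l (𝓝 1) := by
  rw [← tendsto_ofReal_iff]
  simpa using tendsto_one_sub_exp_neg_div ht (tendsto_const_nhds (x := (1 : ℂ)))

lemma tendsto_qWeight {α : Type*} {l : Filter α} {t : α → ℝ} (ht : Tendsto t l (𝓝[>] 0)) (n : ℕ) :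
    Tendsto (fun a => qWeight (t a) n) l (𝓝 (1 / (n + 1))) := by
  have h := tendsto_one_sub_exp_neg_div ht (tendsto_const_nhds (x := (-(n + 1) : ℂ)))
  have h' : Tendsto (fun a => (1 - Real.exp (-(t a * -((n : ℝ) + 1)))) / t a) l
      (𝓝 (-((n : ℝ) + 1))) := by
    rw [← tendsto_ofReal_iff]
    push_cast
    exact h
  have hne : -((n : ℝ) + 1) ≠ 0 := neg_ne_zero.mpr (by positivity)
  have hinv := (h'.inv₀ hne).neg
  rw [inv_neg, neg_neg, ← one_div] at hinv
  refine hinv.congr fun a => ?_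
  rw [qWeight, mul_neg, neg_neg, inv_div, ← div_neg, neg_sub]

/-- The `n`-th factor of Euler's product for `1 / Γ`, the limit of `qGammaFactor t x n` as
`t → 0⁺`. -/
noncomputable def eulerFactor (x : ℂ) (n : ℕ) : ℂ :=
  (1 + 1 / (n + 1) * x) * exp (-x * Real.log (1 + 1 / (n + 1)))

lemma tendsto_qGammaFactor {α : Type*} {l : Filter α} {t : α → ℝ} {x : α → ℂ} {x₀ : ℂ}
    (ht : Tendsto t l (𝓝[>] 0)) (hx : Tendsto x l (𝓝 x₀)) (n : ℕ) :
    Tendsto (fun a => qGammaFactor (t a) (x a) n) l (𝓝 (eulerFactor x₀ n)) := by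
  have hpos : ∀ᶠ a in l, 0 < t a := ht.eventually self_mem_nhdsWithin
  have hv := tendsto_qWeight ht n
  have hvc : Tendsto (fun a => (qWeight (t a) n : ℂ)) l (𝓝 (1 / (n + 1))) := by
    simpa using tendsto_ofReal_iff.mpr hv
  have hlog : Tendsto (fun a => Real.log (1 + qWeight (t a) n * ((1 - Real.exp (-(t a))) / t a))) l
      (𝓝 (Real.log (1 + 1 / (n + 1)))) := by
    refine Tendsto.log ?_ (by positivity)
    simpa using (hv.mul (tendsto_real_one_sub_exp_neg_div ht)).const_add 1
  have hlogc := (Complex.continuous_ofReal.tendsto _).comp hlog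
  have := ((hvc.mul (tendsto_one_sub_exp_neg_div ht hx)).const_add 1).mul
    ((Complex.continuous_exp.tendsto _).comp (hx.neg.mul hlogc))
  refine this.congr' ?_
  filter_upwards [hpos] with a ha
  rw [qGammaFactor, ratio_eq_one_add_qWeight ha, real_ratio_eq_one_add_qWeight ha]
  rfl

lemma summable_const_mul_one_div_succ_sq (C : ℝ) :
    Summable fun n : ℕ => C * (1 / ((n : ℝ) + 1) ^ 2) := by
  refine Summable.mul_left _ ?_
  exact_mod_cast (summable_nat_add_iff 1).mpr (Real.summable_one_div_nat_pow.mpr one_lt_two)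

lemma tendsto_tprod_qGammaFactor {α : Type*} {l : Filter α} {t : α → ℝ} {x : α → ℂ} {x₀ : ℂ}
    (ht : Tendsto t l (𝓝[>] 0)) (hx : Tendsto x l (𝓝 x₀)) :
    Tendsto (fun a => ∏' n, qGammaFactor (t a) (x a) n) l (𝓝 (∏' n, eulerFactor x₀ n)) := by
  obtain ⟨M, hM, hev⟩ := exists_eventually_norm_le ht hx
  have h := tendsto_tprod_one_add_of_dominated_convergence (𝓕 := l)
    (f := fun a n => qGammaFactor (t a) (x a) n - 1) (g := fun n => eulerFactor x₀ n - 1)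
    (summable_const_mul_one_div_succ_sq (3 * M ^ 3 * Real.exp M + 7 * M ^ 2))
    (fun n => (tendsto_qGammaFactor ht hx n).sub_const 1) (by
      filter_upwards [hev] with a ⟨h1, h2, h3⟩ n
        using norm_qGammaFactor_sub_one_le h1 hM h2 h3 n)
  simpa using h

lemma multipliable_eulerFactor (x : ℂ) : Multipliable (eulerFactor x) := by
  obtain ⟨M, hM, hev⟩ := exists_eventually_norm_le (l := 𝓝[>] (0 : ℝ)) tendsto_id
    (tendsto_const_nhds (x := x))
  have hbound (n : ℕ) : ‖eulerFactor x n - 1‖ ≤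
      (3 * M ^ 3 * Real.exp M + 7 * M ^ 2) * (1 / ((n : ℝ) + 1) ^ 2) := by
    refine le_of_tendsto ((tendsto_qGammaFactor (l := 𝓝[>] (0 : ℝ)) tendsto_id
      (tendsto_const_nhds (x := x)) n).sub_const 1).norm ?_
    filter_upwards [hev] with t ⟨h1, h2, h3⟩ using norm_qGammaFactor_sub_one_le h1 hM h2 h3 n
  have := multipliable_one_add_of_summable (f := fun n => eulerFactor x n - 1)
    ((summable_const_mul_one_div_succ_sq _).of_nonneg_of_le (fun _ => norm_nonneg _) hbound)
  simpa using this

lemma mul_prod_eulerFactor (x : ℂ) (N : ℕ) :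
    x * ∏ n ∈ Finset.range N, eulerFactor x n =
      (∏ j ∈ Finset.range (N + 1), (x + j)) / N.factorial * exp (-x * Real.log (N + 1)) := by
  induction N with
  | zero => simp
  | succ N ih =>
    rw [Finset.prod_range_succ, ← mul_assoc, ih, Finset.prod_range_succ _ (N + 1), eulerFactor,
      Nat.factorial_succ]
    have h1 : (N : ℂ) + 1 ≠ 0 := by exact_mod_cast N.succ_ne_zero
    have h2 : (N.factorial : ℂ) ≠ 0 := by exact_mod_cast N.factorial_ne_zero
    have hlog : Real.log (((N + 1 : ℕ) : ℝ) + 1) = Real.log (N + 1) + Real.log (1 + 1 / (N + 1)) := by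
      rw [← Real.log_mul (by positivity) (by positivity)]
      congr 1
      push_cast
      field_simp
    rw [hlog]
    push_cast
    rw [mul_add (-x), Complex.exp_add]
    field_simp
    ring

/-- Euler's product formula for the reciprocal of the Gamma function. -/
lemma mul_tprod_eulerFactor {x : ℂ} (hx : ∀ n : ℕ, x ≠ -(n : ℂ)) :
    x * ∏' n, eulerFactor x n = (Gamma x)⁻¹ := by
  have h1 : Tendsto (fun N : ℕ => x * (∏ n ∈ Finset.range N, eulerFactor x n) *
      (1 + x * (1 / ((N : ℂ) + 1)))) atTop (𝓝 (x * (∏' n, eulerFactor x n) * (1 + x * 0))) :=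
    ((multipliable_eulerFactor x).hasProd.tendsto_prod_nat.const_mul x).mul
      (((tendsto_one_div_add_atTop_nhds_zero_nat (𝕜 := ℂ)).const_mul x).const_add 1)
  have h2 := ((Complex.GammaSeq_tendsto_Gamma x).inv₀ (Gamma_ne_zero hx)).comp
    (tendsto_add_atTop_nat 1)
  rw [mul_zero, add_zero, mul_one] at h1
  refine tendsto_nhds_unique h1 (h2.congr fun N => ?_)
  rw [mul_prod_eulerFactor, Function.comp_apply, GammaSeq, Finset.prod_range_succ _ (N + 1),
    Nat.factorial_succ, cpow_def_of_ne_zero (by exact_mod_cast N.succ_ne_zero)]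
  have h1 : (N : ℂ) + 1 ≠ 0 := by exact_mod_cast N.succ_ne_zero
  have h2 : (N.factorial : ℂ) ≠ 0 := by exact_mod_cast N.factorial_ne_zero
  rw [neg_mul, Complex.exp_neg, Complex.ofReal_log (by positivity)]
  push_cast
  rw [mul_comm (log _) x, inv_div]
  have h3 := exp_ne_zero (x * log (N + 1))
  field_simp
  ring

lemma summable_norm_exp_neg {t : ℝ} (ht : 0 < t) (x : ℂ) :
    Summable fun n : ℕ => ‖-exp (-(t * (x + n)))‖ := by
  have h := (summable_geometric_of_lt_one (Real.exp_pos (-t)).le (by simpa using ht)).mul_left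
    (Real.exp (-(t * x.re)))
  refine h.congr fun n => ?_
  rw [norm_neg, Complex.norm_exp, ← Real.exp_nat_mul, ← Real.exp_add]
  congr 1
  simp
  ring

lemma multipliable_one_sub_exp_neg {t : ℝ} (ht : 0 < t) (x : ℂ) :
    Multipliable fun n : ℕ => 1 - exp (-(t * (x + n))) := by
  simpa [sub_eq_add_neg] using multipliable_one_add_of_summable (summable_norm_exp_neg ht x)

lemma one_sub_exp_neg_ne_zero {s : ℝ} (hs : 0 < s) : 1 - exp (-(s : ℂ)) ≠ 0 := by
  exact_mod_cast (one_sub_exp_neg_pos hs).ne'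

lemma prod_qGammaFactor {t : ℝ} (ht : 0 < t) (x : ℂ) (N : ℕ) :
    ∏ n ∈ Finset.range N, qGammaFactor t x n =
      (∏ n ∈ Finset.range N, (1 - exp (-(t * (x + 1 + n))))) /
        (∏ n ∈ Finset.range N, (1 - exp (-(t * (1 + n))))) *
        exp (-x * (Real.log (1 - Real.exp (-(t * (N + 1)))) - Real.log (1 - Real.exp (-t)))) := by
  induction N with
  | zero => simp
  | succ N ih =>
    rw [Finset.prod_range_succ, ih, Finset.prod_range_succ, Finset.prod_range_succ, qGammaFactor,
      Real.log_div (one_sub_exp_neg_pos (by positivity)).ne'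
        (one_sub_exp_neg_pos (by positivity)).ne',
      show ((N + 1 : ℕ) : ℝ) + 1 = N + 2 by push_cast; ring, mul_div_mul_comm, mul_mul_mul_comm,
      ← Complex.exp_add, show x + (N + 1) = x + 1 + (N : ℂ) by ring, add_comm (N : ℂ) 1]
    congr 2
    push_cast
    ring

lemma tprod_one_sub_exp_neg_ne_zero {t : ℝ} (ht : 0 < t) :
    ∏' n : ℕ, (1 - exp (-(t * (1 + n)))) ≠ 0 := by
  have := tprod_one_add_ne_zero_of_summable (f := fun n : ℕ => -exp (-(t * (1 + n)))) (fun n => by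
    have := one_sub_exp_neg_ne_zero (s := t * (1 + n)) (by positivity)
    rw [← sub_eq_add_neg]
    exact_mod_cast this) (summable_norm_exp_neg ht 1)
  simpa [sub_eq_add_neg] using this

lemma tprod_qGammaFactor {t M : ℝ} {x : ℂ} (ht : 0 < t) (hM : 1 ≤ M) (hx : ‖x‖ ≤ M)
    (htM : t * M ≤ 1) :
    ∏' n, qGammaFactor t x n =
      (∏' n : ℕ, (1 - exp (-(t * (x + 1 + n))))) / (∏' n : ℕ, (1 - exp (-(t * (1 + n))))) *
        exp (x * Real.log (1 - Real.exp (-t))) := by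
  have hmul : Multipliable (qGammaFactor t x) := by
    have := multipliable_one_add_of_summable (f := fun n => qGammaFactor t x n - 1)
      ((summable_const_mul_one_div_succ_sq _).of_nonneg_of_le (fun _ => norm_nonneg _)
        (norm_qGammaFactor_sub_one_le ht hM hx htM))
    simpa using this
  refine tendsto_nhds_unique hmul.hasProd.tendsto_prod_nat ?_
  simp only [prod_qGammaFactor ht]
  refine ((multipliable_one_sub_exp_neg ht (x + 1)).hasProd.tendsto_prod_nat.div
    (multipliable_one_sub_exp_neg ht 1).hasProd.tendsto_prod_nat
    (tprod_one_sub_exp_neg_ne_zero ht)).mul ?_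
  have hlog : Tendsto (fun N : ℕ => Real.log (1 - Real.exp (-(t * ((N : ℝ) + 1))))) atTop (𝓝 0) := by
    rw [← Real.log_one]
    refine Tendsto.log ?_ one_ne_zero
    have : Tendsto (fun N : ℕ => Real.exp (-(t * ((N : ℝ) + 1)))) atTop (𝓝 0) :=
      Real.tendsto_exp_neg_atTop_nhds_zero.comp
        ((tendsto_atTop_add_const_right _ 1 tendsto_natCast_atTop_atTop).const_mul_atTop ht)
    simpa using this.const_sub 1
  have h := (Complex.continuous_exp.tendsto _).comp
    ((((Complex.continuous_ofReal.tendsto _).comp hlog).sub_const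
      (Real.log (1 - Real.exp (-t)) : ℂ)).const_mul (-x))
  rw [ofReal_zero, zero_sub, neg_mul_neg] at h
  exact h

lemma tprod_one_sub_exp_neg_eq_mul {t : ℝ} (ht : 0 < t) (x : ℂ) :
    ∏' n : ℕ, (1 - exp (-(t * (x + n)))) =
      (1 - exp (-(t * x))) * ∏' n : ℕ, (1 - exp (-(t * (x + 1 + n)))) := by
  have h := (multipliable_one_sub_exp_neg ht (x + 1)).congr (g := fun n : ℕ =>
    1 - exp (-(t * (x + (n + 1 : ℕ))))) (fun n => by push_cast; ring_nf)
  rw [tprod_eq_zero_mul' (f := fun n : ℕ => 1 - exp (-(t * (x + n)))) h]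
  simp only [Nat.cast_zero, add_zero]
  congr 2
  ext n
  push_cast
  ring_nf

lemma eta_I_mul (r : ℝ) :
    ModularForm.eta (I * r) = exp (-(Real.pi * r / 12)) *
      ∏' n : ℕ, (1 - exp (-((2 * Real.pi * r : ℝ) * (1 + n)))) := by
  rw [ModularForm.eta, Function.Periodic.qParam]
  congr 1
  · congr 1
    push_cast
    linear_combination (Real.pi * r / 12 : ℂ) * I_sq
  · congr 1
    ext n
    rw [ModularForm.eta_q_eq_cexp]
    congr 2
    push_cast
    linear_combination (2 * Real.pi * r * (n + 1) : ℂ) * I_sq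

/-- The modular transformation of the Dedekind eta function, on the imaginary axis. -/
lemma exp_mul_tprod_one_sub_exp_inv {r : ℝ} (hr : 0 < r) :
    exp (-(Real.pi * (r⁻¹ : ℝ) / 12)) *
        ∏' n : ℕ, (1 - exp (-((2 * Real.pi * r⁻¹ : ℝ) * (1 + n)))) =
      (Real.sqrt r : ℂ) * (exp (-(Real.pi * r / 12)) *
        ∏' n : ℕ, (1 - exp (-((2 * Real.pi * r : ℝ) * (1 + n))))) := by
  have h := ModularForm.eta_comp_eq_csqrt_I_inv (show I * r ∈ UpperHalfPlane.upperHalfPlaneSet by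
    simpa using hr)
  have hrc : (r : ℂ) ≠ 0 := by exact_mod_cast hr.ne'
  have harg : -1 / (I * r) = I * (r⁻¹ : ℝ) := by
    push_cast
    field_simp
    rw [I_sq]
  have hsqrt : Complex.sqrt (I * r) = Complex.sqrt I * (Real.sqrt r : ℂ) := by
    rw [mul_comm, Complex.sqrt, cpow_def_of_ne_zero (mul_ne_zero hrc I_ne_zero),
      Complex.log_ofReal_mul hr I_ne_zero, Complex.sqrt, cpow_def_of_ne_zero I_ne_zero,
      add_mul, Complex.exp_add, mul_comm, Real.sqrt_eq_rpow, Real.rpow_def_of_pos hr]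
    push_cast
    norm_num
  have hI : Complex.sqrt I ≠ 0 := by simp [Complex.sqrt]
  simp only [Function.comp_apply, Pi.smul_apply, Pi.mul_apply, smul_eq_mul, harg, hsqrt,
    eta_I_mul] at h
  rw [h]
  field_simp

lemma br_sq {r : ℝ} (hr : 0 < r) : br r ^ 2 = I * r := by
  rw [br, mul_pow, ← Complex.exp_nat_mul, ← ofReal_pow, Real.sq_sqrt hr.le]
  congr 1
  rw [show ((2 : ℕ) : ℂ) * (Real.pi * I / 4) = Real.pi / 2 * I by push_cast; ring,
    Complex.exp_pi_div_two_mul_I]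

lemma br_ne_zero {r : ℝ} (hr : 0 < r) : br r ≠ 0 := by
  have : Real.sqrt r ≠ 0 := (Real.sqrt_pos.mpr hr).ne'
  simp [br, this]

lemma br_inv_sq {r : ℝ} (hr : 0 < r) : (br r)⁻¹ ^ 2 = -I * (r⁻¹ : ℝ) := by
  rw [inv_pow, br_sq hr, mul_inv, inv_I, ofReal_inv]

lemma br_mul_zetaBar {r : ℝ} (hr : 0 < r) :
    br r * zetaBar (br r) =
      Real.sqrt r * exp (Real.pi * r / 12) * exp (-(Real.pi * (r⁻¹ : ℝ) / 12)) := by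
  rw [zetaBar, br_sq hr, br_inv_sq hr, br, mul_comm (exp _), mul_assoc, mul_assoc,
    ← Complex.exp_add, ← Complex.exp_add]
  congr 2
  linear_combination (-(Real.pi / 12 * (r - (r⁻¹ : ℝ))) : ℂ) * I_sq

/-- The numerator product of `G_{b(r)}(b(r) x)`, with `s = 2π/r`. -/
noncomputable def dualProd (s : ℝ) (x : ℂ) : ℂ :=
  ∏' n : ℕ, (1 - exp (2 * Real.pi * I * x) * exp (-(s * (1 + n))))

lemma dualProd_zero (s : ℝ) : dualProd s 0 = ∏' n : ℕ, (1 - exp (-(s * (1 + n)))) := by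
  simp [dualProd]

lemma mul_Gb_eq {r : ℝ} (hr : 0 < r) (x : ℂ) :
    2 * (Real.pi : ℂ) * br r * Gb (br r) (br r * x) =
      (2 * Real.pi * r : ℝ) * (∏' n : ℕ, (1 - exp (-((2 * Real.pi * r : ℝ) * (1 + n))))) *
        dualProd (2 * Real.pi * r⁻¹) x / dualProd (2 * Real.pi * r⁻¹) 0 /
        ∏' n : ℕ, (1 - exp (-((2 * Real.pi * r : ℝ) * (x + n)))) := by
  have hs : 0 < 2 * Real.pi * r⁻¹ := by positivity
  have hb := br_ne_zero hr
  have hnum (n : ℕ) : exp (2 * Real.pi * I * (br r)⁻¹ * (br r * x - (n + 1) * (br r)⁻¹)) =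
      exp (2 * Real.pi * I * x) * exp (-((2 * Real.pi * r⁻¹ : ℝ) * (1 + n))) := by
    rw [← Complex.exp_add, show 2 * Real.pi * I * (br r)⁻¹ * (br r * x - (n + 1) * (br r)⁻¹) =
      2 * Real.pi * I * (((br r)⁻¹ * br r) * x - (n + 1) * (br r)⁻¹ ^ 2) by ring,
      inv_mul_cancel₀ hb, br_inv_sq hr]
    congr 1
    push_cast
    linear_combination (2 * Real.pi * (n + 1) * (r : ℂ)⁻¹) * I_sq
  have hden (n : ℕ) : exp (2 * Real.pi * I * br r * (br r * x + n * br r)) =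
      exp (-((2 * Real.pi * r : ℝ) * (x + n))) := by
    rw [show 2 * Real.pi * I * br r * (br r * x + n * br r) =
      2 * Real.pi * I * br r ^ 2 * (x + n) by ring, br_sq hr]
    congr 1
    push_cast
    linear_combination (2 * Real.pi * r * (x + n)) * I_sq
  have hsq : (Real.sqrt r : ℂ) * Real.sqrt r = r := by exact_mod_cast Real.mul_self_sqrt hr.le
  have heta := exp_mul_tprod_one_sub_exp_inv hr
  rw [← dualProd_zero] at heta
  have hdual : dualProd (2 * Real.pi * r⁻¹) 0 ≠ 0 := by
    rw [dualProd_zero]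
    exact tprod_one_sub_exp_neg_ne_zero hs
  have hexp : exp (Real.pi * r / 12 : ℂ) * exp (-(Real.pi * r / 12)) = 1 := by
    rw [← Complex.exp_add, add_neg_cancel, Complex.exp_zero]
  rw [Gb]
  simp only [hnum, hden]
  change _ * (zetaBar (br r) * dualProd (2 * Real.pi * r⁻¹) x / _) = _
  rw [← mul_div_assoc]
  congr 1
  rw [eq_div_iff hdual]
  set D := ∏' n : ℕ, (1 - exp (-((2 * Real.pi * r : ℝ) * (1 + n))))
  set N := dualProd (2 * Real.pi * r⁻¹) x
  set N₀ := dualProd (2 * Real.pi * r⁻¹) 0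
  calc 2 * (Real.pi : ℂ) * br r * (zetaBar (br r) * N) * N₀
      = 2 * Real.pi * (br r * zetaBar (br r)) * N * N₀ := by ring
    _ = 2 * Real.pi * Real.sqrt r * exp (Real.pi * r / 12) * N *
        (exp (-(Real.pi * (r⁻¹ : ℝ) / 12)) * N₀) := by rw [br_mul_zetaBar hr]; ring
    _ = 2 * Real.pi * (Real.sqrt r * Real.sqrt r) *
        (exp (Real.pi * r / 12) * exp (-(Real.pi * r / 12))) * D * N := by rw [heta]; ring
    _ = (2 * Real.pi * r : ℝ) * D * N := by
      rw [hsq, hexp]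
      push_cast
      ring

lemma tendsto_dualProd {α : Type*} {l : Filter α} {s : α → ℝ} {x : α → ℂ} {x₀ : ℂ}
    (hs : Tendsto s l atTop) (hx : Tendsto x l (𝓝 x₀)) :
    Tendsto (fun a => dualProd (s a) (x a)) l (𝓝 1) := by
  have hc : Tendsto (fun a => exp (2 * Real.pi * I * x a)) l (𝓝 (exp (2 * Real.pi * I * x₀))) :=
    (Complex.continuous_exp.tendsto _).comp (hx.const_mul _)
  set B := ‖exp (2 * Real.pi * I * x₀)‖ + 1
  have hB : ∀ᶠ a in l, ‖exp (2 * Real.pi * I * x a)‖ ≤ B :=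
    (hc.norm.eventually (gt_mem_nhds (lt_add_one _))).mono fun _ h => h.le
  have hnorm (a : α) (n : ℕ) : ‖exp (-(s a * (1 + n) : ℂ))‖ = Real.exp (-(s a)) ^ (n + 1) := by
    rw [Complex.norm_exp, ← Real.exp_nat_mul]
    congr 1
    simp
    ring
  have hexp : Tendsto (fun a => Real.exp (-(s a))) l (𝓝 0) :=
    Real.tendsto_exp_neg_atTop_nhds_zero.comp hs
  have hhalf : ∀ᶠ a in l, Real.exp (-(s a)) ≤ 1 / 2 :=
    (hexp.eventually (gt_mem_nhds (by norm_num))).mono fun _ h => h.le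
  have hlim (n : ℕ) : Tendsto
      (fun a => -(exp (2 * Real.pi * I * x a) * exp (-(s a * (1 + n) : ℂ)))) l (𝓝 0) := by
    have h0 : Tendsto (fun a => exp (-(s a * (1 + n) : ℂ))) l (𝓝 0) := by
      rw [tendsto_zero_iff_norm_tendsto_zero]
      simpa [hnorm] using hexp.pow (n + 1)
    simpa using (hc.mul h0).neg
  have h := tendsto_tprod_one_add_of_dominated_convergence (𝓕 := l) (g := fun _ : ℕ => (0 : ℂ))
    (bound := fun n : ℕ => B * (1 / 2 : ℝ) ^ (n + 1))
    (((summable_nat_add_iff 1).mpr summable_geometric_two).mul_left B) hlim (by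
      filter_upwards [hB, hhalf] with a h1 h2 n
      rw [norm_neg, norm_mul, hnorm]
      gcongr)
  simpa [dualProd, sub_eq_add_neg] using h

lemma inv_mul_Gb_div_cpow {r M : ℝ} {x : ℂ} (hr : 0 < r) (hM : 1 ≤ M) (hx : ‖x‖ ≤ M)
    (hrM : 2 * Real.pi * r * M ≤ 1) :
    (2 * (Real.pi : ℂ) * br r * Gb (br r) (br r * x) / ((2 * Real.pi * r : ℝ) : ℂ) ^ x)⁻¹ =
      (1 - exp (-((2 * Real.pi * r : ℝ) * x))) / (2 * Real.pi * r : ℝ) *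
        (∏' n, qGammaFactor (2 * Real.pi * r) x n) *
        exp (-x * Real.log ((1 - Real.exp (-(2 * Real.pi * r))) / (2 * Real.pi * r))) *
        (dualProd (2 * Real.pi * r⁻¹) 0 / dualProd (2 * Real.pi * r⁻¹) x) := by
  have ht : 0 < 2 * Real.pi * r := by positivity
  rw [mul_Gb_eq hr, tprod_one_sub_exp_neg_eq_mul ht x, tprod_qGammaFactor ht hM hx hrM]
  have hD := tprod_one_sub_exp_neg_ne_zero ht
  set t := 2 * Real.pi * r
  have htc : (t : ℂ) ≠ 0 := by exact_mod_cast ht.ne'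
  set D := ∏' n : ℕ, (1 - exp (-((t : ℂ) * (1 + n))))
  set D' := ∏' n : ℕ, (1 - exp (-((t : ℂ) * (x + 1 + n))))
  have hexp : (t : ℂ) ^ x = exp (x * Real.log (1 - Real.exp (-t))) *
      exp (-x * Real.log ((1 - Real.exp (-t)) / t)) := by
    rw [cpow_def_of_ne_zero htc, ← Complex.exp_add, Real.log_div (one_sub_exp_neg_pos ht).ne' ht.ne',
      ← Complex.ofReal_log ht.le]
    congr 1
    push_cast
    ring
  rw [hexp]
  simp only [div_eq_mul_inv, mul_inv, inv_inv]
  field_simp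

lemma tendsto_mul_Gb_div_cpow {α : Type*} {l : Filter α} {r : α → ℝ} {x : α → ℂ} {x₀ : ℂ}
    (hr : Tendsto r l (𝓝[>] 0)) (hx : Tendsto x l (𝓝 x₀)) (hx₀ : ∀ n : ℕ, x₀ ≠ -(n : ℂ)) :
    Tendsto (fun a => 2 * (Real.pi : ℂ) * br (r a) * Gb (br (r a)) (br (r a) * x a) /
      ((2 * Real.pi * r a : ℝ) : ℂ) ^ x a) l (𝓝 (Gamma x₀)) := by
  have hpos : ∀ᶠ a in l, 0 < r a := hr.eventually self_mem_nhdsWithin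
  have ht : Tendsto (fun a => 2 * Real.pi * r a) l (𝓝[>] 0) := by
    refine tendsto_nhdsWithin_iff.mpr ⟨?_, hpos.mono fun a h => Set.mem_Ioi.mpr (by positivity)⟩
    simpa using (hr.mono_right nhdsWithin_le_nhds).const_mul (2 * Real.pi)
  have hs : Tendsto (fun a => 2 * Real.pi * (r a)⁻¹) l atTop :=
    (tendsto_inv_nhdsGT_zero.comp hr).const_mul_atTop (by positivity)
  have hlog := (Complex.continuous_ofReal.tendsto _).comp
    ((tendsto_real_one_sub_exp_neg_div ht).log one_ne_zero)
  have hlim := (((tendsto_one_sub_exp_neg_div ht hx).mul (tendsto_tprod_qGammaFactor ht hx)).mul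
    ((Complex.continuous_exp.tendsto _).comp (hx.neg.mul hlog))).mul
    ((tendsto_dualProd hs (tendsto_const_nhds (x := (0 : ℂ)))).div (tendsto_dualProd hs hx)
      one_ne_zero)
  rw [mul_tprod_eulerFactor hx₀, Real.log_one, ofReal_zero, mul_zero, Complex.exp_zero, div_one,
    mul_one, mul_one] at hlim
  obtain ⟨M, hM, hev⟩ := exists_eventually_norm_le ht hx
  have hinv := hlim.inv₀ (inv_ne_zero (Gamma_ne_zero hx₀))
  rw [inv_inv] at hinv
  refine hinv.congr' ?_
  filter_upwards [hev, hpos] with a ⟨_, h2, h3⟩ hra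
  exact inv_eq_iff_eq_inv.mpr (inv_mul_Gb_div_cpow hra hM h2 h3).symm

/-- For `x ∉ {0, −1, −2, …}`,
`lim_{r→0⁺} (2π b(r)) G_{b(r)}(b(r) x) / (2πr)^x = Γ(x)`,
uniformly on compact subsets of `ℂ ∖ {0, −1, −2, …}`. -/
theorem stmt0 :
    (∀ x : ℂ, (∀ n : ℕ, x ≠ -(n : ℂ)) →
      Tendsto
        (fun r : ℝ =>
          2 * (Real.pi : ℂ) * br r * Gb (br r) (br r * x) / ((2 * Real.pi * r : ℝ) : ℂ) ^ x)
        (𝓝[>] (0 : ℝ)) (𝓝 (Complex.Gamma x))) ∧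
    (∀ K : Set ℂ, IsCompact K → (∀ x ∈ K, ∀ n : ℕ, x ≠ -(n : ℂ)) →
      TendstoUniformlyOn
        (fun r : ℝ => fun x : ℂ =>
          2 * (Real.pi : ℂ) * br r * Gb (br r) (br r * x) / ((2 * Real.pi * r : ℝ) : ℂ) ^ x)
        Complex.Gamma (𝓝[>] (0 : ℝ)) K) := by
  refine ⟨fun x hx => tendsto_mul_Gb_div_cpow tendsto_id tendsto_const_nhds hx, fun K hK hKx => ?_⟩
  rw [← tendstoLocallyUniformlyOn_iff_tendstoUniformlyOn_of_compact hK,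
    tendstoLocallyUniformlyOn_iff_forall_tendsto]
  intro x hx
  have hsnd : Tendsto (Prod.snd : ℝ × ℂ → ℂ) (𝓝[>] (0 : ℝ) ×ˢ 𝓝[K] x) (𝓝 x) :=
    tendsto_snd.mono_right nhdsWithin_le_nhds
  have hΓ : Tendsto (fun p : ℝ × ℂ => Gamma p.2) (𝓝[>] (0 : ℝ) ×ˢ 𝓝[K] x) (𝓝 (Gamma x)) :=
    ((differentiableAt_Gamma x (hKx x hx)).continuousAt.tendsto).comp hsnd
  exact (hΓ.prodMk_nhds (tendsto_mul_Gb_div_cpow tendsto_fst hsnd (hKx x hx))).mono_right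
    (nhds_le_uniformity _)
end

section
/- The following limit holds: lim_{r→0⁺} e^{(πr − π/r)/12} / ( √r · ∏_{n=1}^∞ (1 − e^{−2πrn}) ) = 1. -/
open Filter Topology

/-- The product `∏_{n ≥ 1} (1 - e^{-2πrn})`. -/
noncomputable def eulerProduct (r : ℝ) : ℝ :=
  ∏' n : ℕ, (1 - Real.exp (-2 * Real.pi * r * (n + 1)))

lemma Complex.ofReal_tprod {ι : Type*} (f : ι → ℝ) :
    ((∏' i, f i : ℝ) : ℂ) = ∏' i, (f i : ℂ) :=
  Function.LeftInverse.map_tprod (g := Complex.ofRealHom) f Complex.continuous_ofReal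
    Complex.continuous_re Complex.ofReal_re

/-- On the positive imaginary axis, `η(ir) = e^{-πr/12} ∏_{n ≥ 1} (1 - e^{-2πrn})`. -/
lemma eta_I_mul_ofReal (r : ℝ) :
    ModularForm.eta (Complex.I * r) =
      ((Real.exp (-(Real.pi * r) / 12) * eulerProduct r : ℝ) : ℂ) := by
  rw [ModularForm.eta, eulerProduct, Complex.ofReal_mul, Complex.ofReal_tprod]
  congr 1
  · rw [Function.Periodic.qParam, Complex.ofReal_exp]
    congr 1
    push_cast
    linear_combination (Real.pi * r / 12 : ℂ) * Complex.I_sq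
  · refine tprod_congr fun n ↦ ?_
    rw [ModularForm.eta_q_eq_cexp, Complex.ofReal_sub, Complex.ofReal_one, Complex.ofReal_exp]
    congr 2
    push_cast
    linear_combination (2 * Real.pi * r * (n + 1) : ℂ) * Complex.I_sq

/-- The inversion formula `η(i/r) = √r η(ir)`. -/
lemma eta_I_mul_inv {r : ℝ} (hr : 0 < r) :
    ModularForm.eta (Complex.I * (r⁻¹ : ℝ)) = Real.sqrt r * ModularForm.eta (Complex.I * r) := by
  have hmem : (Complex.I * r : ℂ) ∈ UpperHalfPlane.upperHalfPlaneSet := by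
    simpa [UpperHalfPlane.upperHalfPlaneSet] using hr
  have hinv : (-1 / (Complex.I * r) : ℂ) = Complex.I * (r⁻¹ : ℝ) := by
    have : (r : ℂ) ≠ 0 := by exact_mod_cast hr.ne'
    push_cast
    field_simp
    exact Complex.I_sq.symm
  have hsqrt : Complex.sqrt (Complex.I * r) = Complex.sqrt Complex.I * Real.sqrt r := by
    have hr' : (r : ℂ) ≠ 0 := by exact_mod_cast hr.ne'
    rw [mul_comm, sqrt_eq_exp (mul_ne_zero hr' Complex.I_ne_zero),
      Complex.log_ofReal_mul hr Complex.I_ne_zero, sqrt_eq_exp Complex.I_ne_zero,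
      add_div, Complex.exp_add, mul_comm]
    congr 1
    rw [← Real.exp_log hr, ← Real.exp_half, Real.exp_log hr]
    push_cast
    rfl
  have hI : Complex.sqrt Complex.I ≠ 0 := by
    rw [sqrt_eq_exp Complex.I_ne_zero]
    exact Complex.exp_ne_zero _
  have h := ModularForm.eta_comp_eq_csqrt_I_inv hmem
  simp only [Function.comp_apply, Pi.smul_apply, Pi.mul_apply, smul_eq_mul] at h
  rw [hinv, hsqrt] at h
  rw [h]
  field_simp

lemma sqrt_mul_eulerProduct {r : ℝ} (hr : 0 < r) :
    Real.sqrt r * eulerProduct r =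
      Real.exp ((Real.pi * r - Real.pi / r) / 12) * eulerProduct r⁻¹ := by
  have h := eta_I_mul_inv hr
  rw [eta_I_mul_ofReal, eta_I_mul_ofReal, ← Complex.ofReal_mul, Complex.ofReal_inj] at h
  have hexp : Real.exp ((Real.pi * r - Real.pi / r) / 12) =
      Real.exp (-(Real.pi * r⁻¹) / 12) * Real.exp (Real.pi * r / 12) := by
    rw [← Real.exp_add]
    ring_nf
  have hone : Real.exp (-(Real.pi * r) / 12) * Real.exp (Real.pi * r / 12) = 1 := by
    rw [← Real.exp_add, ← Real.exp_zero]
    ring_nf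
  rw [hexp]
  linear_combination (-Real.exp (Real.pi * r / 12)) * h - Real.sqrt r * eulerProduct r * hone

lemma tendsto_eulerProduct_atTop : Tendsto eulerProduct atTop (𝓝 1) := by
  have hprod : Tendsto (fun q : ℝ ↦ ∏' n : ℕ, (1 + -q ^ (n + 1))) (𝓝 0) (𝓝 1) := by
    have := tendsto_tprod_one_add_of_dominated_convergence (𝓕 := 𝓝 0) (g := 0)
      (f := fun (q : ℝ) (n : ℕ) ↦ -q ^ (n + 1)) (bound := fun n ↦ (1 / 2 : ℝ) ^ (n + 1))
    simp only [Pi.zero_apply, norm_neg, norm_pow, add_zero, tprod_one] at this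
    refine this
      (by simpa only [pow_succ'] using (summable_geometric_of_abs_lt_one (by norm_num)).mul_left _)
      (fun k ↦ by simpa using ((continuous_pow (M := ℝ) (k + 1)).tendsto 0).neg) ?_
    filter_upwards [Metric.ball_mem_nhds (0 : ℝ) (by norm_num : (0 : ℝ) < 1 / 2)] with q hq k
    exact pow_le_pow_left₀ (norm_nonneg _) (mem_ball_zero_iff.mp hq).le _
  have hq : Tendsto (fun s : ℝ ↦ Real.exp (-2 * Real.pi * s)) atTop (𝓝 0) :=
    Real.tendsto_exp_atBot.comp
      (tendsto_id.const_mul_atTop_of_neg (by linarith [Real.pi_pos]))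
  refine (hprod.comp hq).congr fun s ↦ tprod_congr fun n ↦ ?_
  rw [← Real.exp_nat_mul, ← sub_eq_add_neg]
  push_cast
  ring_nf

/-- `lim_{r→0⁺} e^{(πr − π/r)/12} / (√r · ∏_{n=1}^∞ (1 − e^{−2πrn})) = 1`. -/
theorem stmt2 :
    Tendsto
      (fun r : ℝ =>
        Real.exp ((Real.pi * r - Real.pi / r) / 12) /
          (Real.sqrt r * ∏' n : ℕ, (1 - Real.exp (-2 * Real.pi * r * (n + 1)))))
      (𝓝[>] (0 : ℝ)) (𝓝 1) := by
  have hlim : Tendsto (fun r : ℝ ↦ (eulerProduct r⁻¹)⁻¹) (𝓝[>] 0) (𝓝 1) := by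
    simpa using (tendsto_eulerProduct_atTop.comp tendsto_inv_nhdsGT_zero).inv₀ one_ne_zero
  refine hlim.congr' ?_
  filter_upwards [self_mem_nhdsWithin] with r hr
  change _ = _ / (Real.sqrt r * eulerProduct r)
  rw [sqrt_mul_eulerProduct hr, div_mul_cancel_left₀ (Real.exp_ne_zero _)]
end

section
/- Let b ∈ ℂ with 0 < arg b < π/2 (so that Im(b²) > 0). Then lim_{x→0} x · G_b(x) = 1/(2π), where the limit is taken over x ∈ ℂ tending to 0 at which G_b(x) is defined. -/
open Complex Filter Topology

/-- For `b` in the open first quadrant, `b ^ 2` lies in the upper half-plane. -/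
lemma im_sq_pos {b : ℂ} (h1 : 0 < b.arg) (h2 : b.arg < Real.pi / 2) : 0 < (b ^ 2).im := by
  have hre : 0 < b.re := by
    have h : |b.arg| < Real.pi / 2 := abs_lt.mpr ⟨by linarith [Real.pi_pos], h2⟩
    rcases abs_arg_lt_pi_div_two_iff.mp h with h | h
    · exact h
    · simp [h] at h1
  have him : 0 < b.im := by
    have hsin : 0 < Real.sin b.arg := Real.sin_pos_of_pos_of_lt_pi h1 (by linarith [Real.pi_pos])
    rw [sin_arg] at hsin
    exact (div_pos_iff_of_pos_right (norm_pos_iff.mpr (by rintro rfl; simp at h1))).mp hsin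
  have : (b ^ 2).im = 2 * (b.re * b.im) := by
    simp [pow_two]
    ring
  rw [this]
  positivity

lemma norm_exp_two_pi_mul_I_lt_one {z : ℂ} (hz : 0 < z.im) :
    ‖cexp (2 * Real.pi * I * z)‖ < 1 :=
  UpperHalfPlane.norm_exp_two_pi_I_lt_one ⟨z, hz⟩

lemma multipliable_one_sub_const_mul_pow (a : ℂ) {q : ℂ} (hq : ‖q‖ < 1) :
    Multipliable fun n : ℕ => 1 - a * q ^ (n + 1) := by
  simp_rw [sub_eq_add_neg]
  refine multipliable_one_add_of_summable ?_
  simpa using ((summable_nat_add_iff 1).mpr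
    (summable_geometric_of_lt_one (norm_nonneg _) hq)).mul_left ‖a‖

lemma tendsto_tprod_one_sub_exp_mul_pow (c : ℂ) {q : ℂ} (hq : ‖q‖ < 1) :
    Tendsto (fun x : ℂ => ∏' n : ℕ, (1 - cexp (c * x) * q ^ (n + 1))) (𝓝 0)
      (𝓝 (∏' n : ℕ, (1 - q ^ (n + 1)))) := by
  have hexp : Tendsto (fun x : ℂ => cexp (c * x)) (𝓝 0) (𝓝 1) := by
    have h : Continuous fun x : ℂ => cexp (c * x) := by fun_prop
    simpa using h.tendsto 0
  simp_rw [sub_eq_add_neg]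
  refine tendsto_tprod_one_add_of_dominated_convergence
    (bound := fun n => 2 * ‖q‖ ^ (n + 1)) ?_ (fun n => ?_) ?_
  · exact ((summable_nat_add_iff 1).mpr
      (summable_geometric_of_lt_one (norm_nonneg _) hq)).mul_left 2
  · simpa using (hexp.mul_const (q ^ (n + 1))).neg
  · have hlt : ∀ᶠ x in 𝓝 (0 : ℂ), ‖cexp (c * x)‖ < 2 :=
      hexp.norm.eventually_lt_const (by simp)
    filter_upwards [hlt] with x hx n
    rw [norm_neg, norm_mul, norm_pow]
    gcongr

lemma tendsto_div_one_sub_exp_mul {c : ℂ} (hc : c ≠ 0) :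
    Tendsto (fun x : ℂ => x / (1 - cexp (c * x))) (𝓝[≠] 0) (𝓝 (-c⁻¹)) := by
  have hd : HasDerivAt (fun x : ℂ => cexp (c * x)) c 0 := by
    simpa using ((hasDerivAt_id (0 : ℂ)).const_mul c).cexp
  have h := ((hasDerivAt_iff_tendsto_slope.mp hd).inv₀ hc).neg
  refine h.congr fun x => ?_
  rw [slope_def_field, inv_div, ← div_neg]
  simp

/-- The inversion formula for the Dedekind eta function at `b ^ 2`, written with the
constant `zetaBar b`. -/
lemma zetaBar_mul_tprod_div_tprod {b : ℂ} (h1 : 0 < b.arg) (h2 : b.arg < Real.pi / 2) :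
    zetaBar b * ((∏' n : ℕ, (1 - cexp (2 * Real.pi * I * (-1 / b ^ 2)) ^ (n + 1))) /
      ∏' n : ℕ, (1 - cexp (2 * Real.pi * I * b ^ 2) ^ (n + 1))) = -I * b := by
  have hτ := im_sq_pos h1 h2
  have hsqrt : sqrt (b ^ 2) = b :=
    pow_cpow_ofNat_inv (n := 2) (by linarith [Real.pi_pos]) h2.le
  have hsqrtI : sqrt I = cexp (Real.pi * I / 4) := by
    rw [sqrt_eq_exp I_ne_zero, log_I]
    ring_nf
  have hP : ∏' n : ℕ, (1 - cexp (2 * Real.pi * I * b ^ 2) ^ (n + 1)) ≠ 0 := by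
    simpa only [ModularForm.eta_q_eq_pow] using ModularForm.eta_tprod_ne_zero hτ
  have heta : ModularForm.eta (-1 / b ^ 2) = (sqrt I)⁻¹ * (b * ModularForm.eta (b ^ 2)) := by
    simpa [hsqrt] using ModularForm.eta_comp_eq_csqrt_I_inv hτ
  simp only [ModularForm.eta, ModularForm.eta_q_eq_pow, Function.Periodic.qParam, hsqrtI,
    ← Complex.exp_neg] at heta
  have hz : zetaBar b = cexp (-(Real.pi * I / 4)) *
      (cexp (2 * Real.pi * I * (-1 / b ^ 2) / (24 : ℝ)) *
        (cexp (2 * Real.pi * I * b ^ 2 / (24 : ℝ)))⁻¹) := by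
    rw [zetaBar, ← Complex.exp_neg, ← Complex.exp_add, ← Complex.exp_add]
    congr 1
    push_cast
    ring
  have hI : cexp (-(Real.pi * I / 4)) * cexp (-(Real.pi * I / 4)) = -I := by
    rw [← Complex.exp_add, ← Complex.exp_neg_pi_div_two_mul_I]
    ring_nf
  rw [hz, ← mul_div_assoc, div_eq_iff hP]
  calc _ = cexp (-(Real.pi * I / 4)) * (cexp (2 * Real.pi * I * b ^ 2 / (24 : ℝ)))⁻¹ *
        (cexp (2 * Real.pi * I * (-1 / b ^ 2) / (24 : ℝ)) *
          ∏' n : ℕ, (1 - cexp (2 * Real.pi * I * (-1 / b ^ 2)) ^ (n + 1))) := by ring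
    _ = _ := by
      rw [heta, ← hI]
      field_simp

/-- Isolating the factor of the denominator of `Gb b x` which vanishes at `x = 0`. -/
lemma Gb_eq_div_mul_div {b : ℂ} (h1 : 0 < b.arg) (h2 : b.arg < Real.pi / 2) (x : ℂ) :
    Gb b x = zetaBar b *
      (∏' n : ℕ, (1 - cexp (2 * Real.pi * I * b⁻¹ * x) *
        cexp (2 * Real.pi * I * (-1 / b ^ 2)) ^ (n + 1))) /
      ((1 - cexp (2 * Real.pi * I * b * x)) *
        ∏' n : ℕ, (1 - cexp (2 * Real.pi * I * b * x) *
          cexp (2 * Real.pi * I * b ^ 2) ^ (n + 1))) := by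
  have hnum (n : ℕ) : cexp (2 * Real.pi * I * b⁻¹ * (x - (n + 1) * b⁻¹)) =
      cexp (2 * Real.pi * I * b⁻¹ * x) * cexp (2 * Real.pi * I * (-1 / b ^ 2)) ^ (n + 1) := by
    rw [← Complex.exp_nat_mul, ← Complex.exp_add]
    congr 1
    push_cast
    ring
  have hden (n : ℕ) : cexp (2 * Real.pi * I * b * (x + (n + 1 : ℕ) * b)) =
      cexp (2 * Real.pi * I * b * x) * cexp (2 * Real.pi * I * b ^ 2) ^ (n + 1) := by
    rw [← Complex.exp_nat_mul, ← Complex.exp_add]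
    congr 1
    push_cast
    ring
  have hq := norm_exp_two_pi_mul_I_lt_one (im_sq_pos h1 h2)
  have hmul : Multipliable fun n : ℕ =>
      1 - cexp (2 * Real.pi * I * b * (x + (n + 1 : ℕ) * b)) := by
    simp only [hden]
    exact multipliable_one_sub_const_mul_pow _ hq
  rw [Gb, tprod_eq_zero_mul' (f := fun n : ℕ => 1 - cexp (2 * Real.pi * I * b * (x + n * b))) hmul]
  simp only [hnum, hden, Nat.cast_zero, zero_mul, add_zero]

/-- For `b` with `0 < arg b < π/2`, `lim_{x→0} x · G_b(x) = 1/(2π)`, the limit being taken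
over points `x` at which `G_b` is defined (no vanishing factor in the denominator product). -/
theorem stmt4 (b : ℂ) (h1 : 0 < b.arg) (h2 : b.arg < Real.pi / 2) :
    Tendsto (fun x : ℂ => x * Gb b x)
      (𝓝[{x : ℂ | ∀ n : ℕ,
        1 - Complex.exp (2 * Real.pi * Complex.I * b * (x + n * b)) ≠ 0}] (0 : ℂ))
      (𝓝 (1 / (2 * (Real.pi : ℂ)))) := by
  set τ : ℂ := b ^ 2 with hτdef
  have hb : b ≠ 0 := by
    rintro rfl
    simp at h1
  have hτ : 0 < τ.im := im_sq_pos h1 h2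
  have hτ' : 0 < (-1 / τ).im := by
    simpa [neg_div] using UpperHalfPlane.im_inv_neg_coe_pos ⟨τ, hτ⟩
  have hπ : (Real.pi : ℂ) ≠ 0 := by exact_mod_cast Real.pi_ne_zero
  have hc : 2 * Real.pi * I * b ≠ 0 := by simp [hb, hπ]
  have hP : ∏' n : ℕ, (1 - cexp (2 * Real.pi * I * τ) ^ (n + 1)) ≠ 0 := by
    simpa only [ModularForm.eta_q_eq_pow] using ModularForm.eta_tprod_ne_zero hτ
  have hnum := tendsto_tprod_one_sub_exp_mul_pow (2 * Real.pi * I * b⁻¹)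
    (norm_exp_two_pi_mul_I_lt_one hτ')
  have hden := tendsto_tprod_one_sub_exp_mul_pow (2 * Real.pi * I * b)
    (norm_exp_two_pi_mul_I_lt_one hτ)
  have hpole := tendsto_div_one_sub_exp_mul hc
  have hle : 𝓝[{x : ℂ | ∀ n : ℕ, 1 - cexp (2 * Real.pi * I * b * (x + n * b)) ≠ 0}] (0 : ℂ)
      ≤ 𝓝[≠] 0 := by
    refine nhdsWithin_mono _ fun x hx h0 => hx 0 ?_
    rw [Set.mem_singleton_iff.mp h0]
    simp
  have hlim := ((hpole.mono_left hle).mul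
    ((hnum.div hden hP).mono_left nhdsWithin_le_nhds)).const_mul (zetaBar b)
  have hval : zetaBar b * (-(2 * Real.pi * I * b)⁻¹ *
      ((∏' n : ℕ, (1 - cexp (2 * Real.pi * I * (-1 / τ)) ^ (n + 1))) /
        ∏' n : ℕ, (1 - cexp (2 * Real.pi * I * τ) ^ (n + 1)))) = 1 / (2 * Real.pi) := by
    rw [mul_left_comm, zetaBar_mul_tprod_div_tprod h1 h2]
    field_simp
  rw [hval] at hlim
  refine hlim.congr fun x => ?_
  rw [Gb_eq_div_mul_div h1 h2, ← hτdef, Pi.div_apply, div_mul_div_comm, ← mul_div_assoc,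
    mul_left_comm, mul_div_assoc]
end

section
/- Let b ∈ ℂ with Im(b²) > 0 and Q = b + b^{−1}. For every x ∈ ℂ at which both G_b(x) and G_b(Q − x) are defined, one has the reflection property G_b(x) · G_b(Q − x) = e^{πi x (x − Q)}. -/
open Complex Filter Topology

open scoped Real

namespace QuantumDilogarithm

/-- The finite `q`-Pochhammer symbol `(q; q)_n` with `q = e^{2πiτ}`. -/
noncomputable def qFactorial (τ : ℂ) (n : ℕ) : ℂ :=
  ∏ j ∈ Finset.range n, (1 - cexp (2 * π * I * (j + 1) * τ))

/-- The reciprocal of `(q; q)_n`, extended by zero to negative `n`. -/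
noncomputable def qFactorialInv (τ : ℂ) : ℤ → ℂ
  | Int.ofNat n => (qFactorial τ n)⁻¹
  | Int.negSucc _ => 0

lemma one_sub_cexp_ne_zero {τ : ℂ} (hτ : 0 < τ.im) (n : ℕ) :
    1 - cexp (2 * π * I * (n + 1) * τ) ≠ 0 := by
  simpa only [ModularForm.eta_q_eq_cexp] using ModularForm.one_sub_eta_q_ne_zero n hτ

lemma qFactorial_ne_zero {τ : ℂ} (hτ : 0 < τ.im) (n : ℕ) : qFactorial τ n ≠ 0 :=
  Finset.prod_ne_zero_iff.mpr fun j _ ↦ one_sub_cexp_ne_zero hτ j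

lemma qFactorial_succ (τ : ℂ) (n : ℕ) :
    qFactorial τ (n + 1) = qFactorial τ n * (1 - cexp (2 * π * I * (n + 1) * τ)) :=
  Finset.prod_range_succ _ _

lemma qFactorialInv_natCast (τ : ℂ) (n : ℕ) : qFactorialInv τ n = (qFactorial τ n)⁻¹ := rfl

lemma qFactorialInv_of_neg (τ : ℂ) {k : ℤ} (hk : k < 0) : qFactorialInv τ k = 0 := by
  obtain ⟨n, rfl⟩ := Int.eq_negSucc_of_lt_zero hk
  rfl

/-- The recursion for the reciprocal `q`-factorial holds at every integer. -/
lemma qFactorialInv_eq {τ : ℂ} (hτ : 0 < τ.im) (k : ℤ) :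
    qFactorialInv τ k =
      (1 - cexp (2 * π * I * (k + 1) * τ)) * qFactorialInv τ (k + 1) := by
  rcases lt_trichotomy k (-1) with hk | rfl | hk
  · simp [qFactorialInv_of_neg τ (show k < 0 by lia), qFactorialInv_of_neg τ (show k + 1 < 0 by lia)]
  · simp [qFactorialInv_of_neg τ (show (-1 : ℤ) < 0 by lia)]
  · lift k to ℕ using by lia
    rw [show (k : ℤ) + 1 = ((k + 1 : ℕ) : ℤ) by push_cast; rfl, qFactorialInv_natCast,
      qFactorialInv_natCast, qFactorial_succ, Int.cast_natCast]
    have := one_sub_cexp_ne_zero hτ k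
    have := qFactorial_ne_zero hτ k
    field_simp

lemma jacobiTheta₂_term_sub_one (u τ m : ℂ) (k : ℤ) :
    jacobiTheta₂_term (k - 1) (u + 1 / 2 - τ / 2) τ * cexp (2 * π * I * (u + m * τ)) =
      -(cexp (2 * π * I * (m - k + 1) * τ) * jacobiTheta₂_term k (u + 1 / 2 - τ / 2) τ) := by
  rw [neg_eq_neg_one_mul, ← Complex.exp_neg_pi_mul_I]
  simp only [jacobiTheta₂_term, ← Complex.exp_add]
  push_cast
  ring_nf

lemma jacobiTheta₂_term_add_one (u τ m : ℂ) (k : ℤ) :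
    jacobiTheta₂_term (k + 1) (u + 1 / 2 - τ / 2) τ * cexp (2 * π * I * ((m + 1) * τ - u)) =
      -(cexp (2 * π * I * (m + k + 1) * τ) * jacobiTheta₂_term k (u + 1 / 2 - τ / 2) τ) := by
  rw [neg_eq_neg_one_mul, ← Complex.exp_pi_mul_I]
  simp only [jacobiTheta₂_term, ← Complex.exp_add]
  push_cast
  ring_nf

lemma hasSum_of_eq {f g : ℤ → ℂ} {a b : ℂ} (h : HasSum g b) (hfg : ∀ k, f k = g k)
    (hab : a = b) : HasSum f a := by
  rwa [hab, funext hfg]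

/-- The finite form of the Jacobi triple product. -/
lemma hasSum_finite_triple_product {τ : ℂ} (hτ : 0 < τ.im) (u : ℂ) (M N : ℕ) :
    HasSum (fun k : ℤ ↦ jacobiTheta₂_term k (u + 1 / 2 - τ / 2) τ *
        (qFactorialInv τ (N + k) * qFactorialInv τ (M - k)))
      ((∏ j ∈ Finset.range M, (1 - cexp (2 * π * I * (u + j * τ)))) *
        (∏ j ∈ Finset.range N, (1 - cexp (2 * π * I * ((j + 1) * τ - u)))) *
        (qFactorial τ (M + N))⁻¹) := by
  induction M with
  | zero =>
    induction N with
    | zero =>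
      refine hasSum_of_eq (hasSum_single (0 : ℤ) fun k hk ↦ ?_) (fun k ↦ rfl) ?_
      rotate_left
      · simp [jacobiTheta₂_term, qFactorialInv, qFactorial]
      · rcases lt_or_gt_of_ne hk with h | h
        · rw [qFactorialInv_of_neg τ (k := _ + k) (by simpa using h)]; ring
        · rw [qFactorialInv_of_neg τ (k := _ - k) (by simpa using h)]; ring
    | succ N ih =>
      have h₁ := (((Equiv.addRight (1 : ℤ)).hasSum_iff.mpr ih).mul_right
        (cexp (2 * π * I * ((N + 1) * τ - u))))
      have h := (ih.sub h₁).mul_right (1 - cexp (2 * π * I * ((0 + N : ℕ) + 1) * τ))⁻¹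
      refine hasSum_of_eq h (fun k ↦ ?_) ?_
      · rw [eq_mul_inv_iff_mul_eq₀ (one_sub_cexp_ne_zero hτ (0 + N))]
        have hM := qFactorialInv_eq hτ (((0 : ℕ) : ℤ) - k - 1)
        have hN := qFactorialInv_eq hτ (N + k)
        have hT := jacobiTheta₂_term_add_one u τ N k
        have hq : cexp (2 * π * I * (((0 + N : ℕ) : ℂ) + 1) * τ) =
            cexp (2 * π * I * (N + k + 1) * τ) * cexp (2 * π * I * (-k) * τ) := by
          rw [← Complex.exp_add]
          push_cast
          ring_nf
        rw [hq]
        simp only [Function.comp_apply, Equiv.coe_addRight]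
        rw [show (N : ℤ) + (k + 1) = N + k + 1 by ring,
          show ((0 : ℕ) : ℤ) - (k + 1) = (0 : ℕ) - k - 1 by ring,
          show ((N + 1 : ℕ) : ℤ) + k = N + k + 1 by push_cast; ring, hN, hM]
        push_cast
        simp only [sub_add_cancel, zero_sub]
        linear_combination (1 - cexp (2 * π * I * (-k) * τ)) * qFactorialInv τ (N + k + 1) *
          qFactorialInv τ (-k) * hT
      · rw [Finset.prod_range_succ _ N, ← add_assoc, qFactorial_succ]
        rw [mul_inv]
        ring
  | succ M ih =>
    have h₁ := (((Equiv.subRight (1 : ℤ)).hasSum_iff.mpr ih).mul_right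
      (cexp (2 * π * I * (u + M * τ))))
    have h := (ih.sub h₁).mul_right (1 - cexp (2 * π * I * ((M + N : ℕ) + 1) * τ))⁻¹
    refine hasSum_of_eq h (fun k ↦ ?_) ?_
    · rw [eq_mul_inv_iff_mul_eq₀ (one_sub_cexp_ne_zero hτ (M + N))]
      have hM := qFactorialInv_eq hτ (M - k)
      have hN := qFactorialInv_eq hτ (N + k - 1)
      have hT := jacobiTheta₂_term_sub_one u τ M k
      have hq : cexp (2 * π * I * (((M + N : ℕ) : ℂ) + 1) * τ) =
          cexp (2 * π * I * (M - k + 1) * τ) * cexp (2 * π * I * (N + k) * τ) := by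
        rw [← Complex.exp_add]
        push_cast
        ring_nf
      simp only [Function.comp_apply, Equiv.subRight_apply]
      rw [hq, show (N : ℤ) + (k - 1) = N + k - 1 by ring,
        show (M : ℤ) - (k - 1) = M - k + 1 by ring,
        show ((M + 1 : ℕ) : ℤ) - k = M - k + 1 by push_cast; ring, hN, hM]
      push_cast
      simp only [sub_add_cancel]
      linear_combination (1 - cexp (2 * π * I * (N + k) * τ)) * qFactorialInv τ (N + k) *
        qFactorialInv τ (M - k + 1) * hT
    · rw [Finset.prod_range_succ _ M, show M + 1 + N = M + N + 1 by ring, qFactorial_succ]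
      rw [mul_inv]
      ring

lemma summable_norm_cexp {τ : ℂ} (hτ : 0 < τ.im) (v : ℂ) :
    Summable fun n : ℕ ↦ ‖-cexp (2 * π * I * (v + n * τ))‖ := by
  have h : ‖cexp (2 * π * I * τ)‖ < 1 := UpperHalfPlane.norm_exp_two_pi_I_lt_one ⟨τ, hτ⟩
  refine ((summable_geometric_of_lt_one (norm_nonneg _) h).mul_left
    ‖cexp (2 * π * I * v)‖).congr fun n ↦ ?_
  rw [norm_neg, ← norm_pow, ← norm_mul, ← Complex.exp_nat_mul, ← Complex.exp_add]
  ring_nf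

lemma sqrt_I_inv_mul_sqrt {τ : ℂ} (hτ : 0 < τ.im) :
    (sqrt I)⁻¹ * sqrt τ = (-I * τ) ^ (1 / 2 : ℂ) := by
  have hτ0 : τ ≠ 0 := by rintro rfl; simp at hτ
  have h0 : -I * τ ≠ 0 := by simp [hτ0]
  have hre : 0 < (-I * τ).re := by simpa using hτ
  have harg := abs_lt.mp (Complex.abs_arg_lt_pi_div_two_iff.mpr (Or.inl hre))
  have hlog : log τ = log I + log (-I * τ) := by
    rw [← Complex.log_mul I_ne_zero h0]
    · congr 1
      linear_combination τ * I_mul_I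
    · rw [Complex.arg_I]
      constructor <;> linarith [harg.1, harg.2]
  rw [sqrt_eq_exp I_ne_zero, sqrt_eq_exp hτ0, cpow_def_of_ne_zero h0, hlog,
    ← Complex.exp_neg, ← Complex.exp_add]
  ring_nf

lemma tendsto_prod_one_sub_cexp {τ : ℂ} (hτ : 0 < τ.im) (v : ℂ) :
    Tendsto (fun n ↦ ∏ j ∈ Finset.range n, (1 - cexp (2 * π * I * (v + j * τ)))) atTop
      (𝓝 (∏' n : ℕ, (1 - cexp (2 * π * I * (v + n * τ))))) := by
  have h := multipliable_one_add_of_summable (summable_norm_cexp hτ v)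
  simp only [← sub_eq_add_neg] at h
  exact h.hasProd.tendsto_prod_nat

lemma tprod_one_sub_cexp_ne_zero {τ : ℂ} (hτ : 0 < τ.im) {v : ℂ}
    (hv : ∀ n : ℕ, 1 - cexp (2 * π * I * (v + n * τ)) ≠ 0) :
    ∏' n : ℕ, (1 - cexp (2 * π * I * (v + n * τ))) ≠ 0 := by
  simpa only [← sub_eq_add_neg] using
    tprod_one_add_ne_zero_of_summable (f := fun n : ℕ ↦ -cexp (2 * π * I * (v + n * τ)))
      (by simpa only [← sub_eq_add_neg] using hv) (summable_norm_cexp hτ v)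

/-- The infinite product `(q; q)_∞` with `q = e^{2πiτ}`. -/
noncomputable def eulerProduct (τ : ℂ) : ℂ :=
  ∏' n : ℕ, (1 - cexp (2 * π * I * (τ + n * τ)))

lemma eulerProduct_ne_zero {τ : ℂ} (hτ : 0 < τ.im) : eulerProduct τ ≠ 0 :=
  tprod_one_sub_cexp_ne_zero hτ fun n ↦ by
    rw [show 2 * π * I * (τ + n * τ) = 2 * π * I * (n + 1) * τ by ring]
    exact one_sub_cexp_ne_zero hτ n

lemma tendsto_qFactorial {τ : ℂ} (hτ : 0 < τ.im) :
    Tendsto (qFactorial τ) atTop (𝓝 (eulerProduct τ)) := by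
  refine (tendsto_prod_one_sub_cexp hτ τ).congr fun n ↦ Finset.prod_congr rfl fun j _ ↦ ?_
  ring_nf

lemma tendsto_qFactorialInv {τ : ℂ} (hτ : 0 < τ.im) :
    Tendsto (qFactorialInv τ) atTop (𝓝 (eulerProduct τ)⁻¹) := by
  rw [← Nat.map_cast_int_atTop, tendsto_map'_iff]
  exact (tendsto_qFactorial hτ).inv₀ (eulerProduct_ne_zero hτ)

lemma exists_norm_qFactorialInv_le {τ : ℂ} (hτ : 0 < τ.im) :
    ∃ C, ∀ k, ‖qFactorialInv τ k‖ ≤ C := by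
  obtain ⟨C, hC⟩ := ((tendsto_qFactorial hτ).inv₀
    (eulerProduct_ne_zero hτ)).norm.bddAbove_range
  have hC' (n : ℕ) : ‖(qFactorial τ n)⁻¹‖ ≤ C := hC ⟨n, rfl⟩
  refine ⟨C, fun k ↦ ?_⟩
  cases k with
  | ofNat n => exact hC' n
  | negSucc n => simpa [qFactorialInv] using (norm_nonneg _).trans (hC' 0)

/-- The **Jacobi triple product** for the two-variable theta function. -/
theorem jacobiTheta₂_eq_triple_product {τ : ℂ} (hτ : 0 < τ.im) (u : ℂ) :
    jacobiTheta₂ (u + 1 / 2 - τ / 2) τ =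
      eulerProduct τ * ((∏' n : ℕ, (1 - cexp (2 * π * I * (u + n * τ)))) *
        ∏' n : ℕ, (1 - cexp (2 * π * I * (τ - u + n * τ)))) := by
  obtain ⟨C, hC⟩ := exists_norm_qFactorialInv_le hτ
  have hC0 : 0 ≤ C := (norm_nonneg _).trans (hC 0)
  have hL := eulerProduct_ne_zero hτ
  have hsum := (summable_jacobiTheta₂_term_iff (u + 1 / 2 - τ / 2) τ).mpr hτ
  have hlim : Tendsto (fun n : ℕ ↦ ∑' k : ℤ, jacobiTheta₂_term k (u + 1 / 2 - τ / 2) τ *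
      (qFactorialInv τ (n + k) * qFactorialInv τ (n - k))) atTop
      (𝓝 (∑' k : ℤ, jacobiTheta₂_term k (u + 1 / 2 - τ / 2) τ *
        ((eulerProduct τ)⁻¹ * (eulerProduct τ)⁻¹))) := by
    refine tendsto_tsum_of_dominated_convergence (hsum.norm.mul_right (C * C)) (fun k ↦ ?_)
      (Eventually.of_forall fun n k ↦ ?_)
    · have hn : Tendsto (fun n : ℕ ↦ (n : ℤ)) atTop atTop := tendsto_natCast_atTop_atTop
      exact (((tendsto_qFactorialInv hτ).comp (tendsto_atTop_add_const_right _ k hn)).mul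
        ((tendsto_qFactorialInv hτ).comp (tendsto_atTop_add_const_right _ (-k) hn))).const_mul _
    · rw [norm_mul, norm_mul]
      gcongr <;> apply hC
  have hprod := ((tendsto_prod_one_sub_cexp hτ u).mul
    (tendsto_prod_one_sub_cexp hτ (τ - u))).mul
    (((tendsto_qFactorial hτ).comp
      (tendsto_atTop_mono (fun n : ℕ ↦ Nat.le_add_left n n) tendsto_id)).inv₀ hL)
  have heq := tendsto_nhds_unique hlim (hprod.congr fun n ↦ ?_)
  · rw [tsum_mul_right] at heq
    change jacobiTheta₂ _ _ * _ = _ at heq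
    refine mul_right_cancel₀ (mul_ne_zero (inv_ne_zero hL) (inv_ne_zero hL)) (heq.trans ?_)
    rw [mul_comm (eulerProduct τ), mul_assoc _ (eulerProduct τ), mul_inv_cancel_left₀ hL]
  · rw [(hasSum_finite_triple_product hτ u n n).tsum_eq]
    simp only [Function.comp_apply, add_mul, one_mul]
    congr 2
    refine Finset.prod_congr rfl fun j _ ↦ ?_
    ring_nf

lemma eta_eq_mul_eulerProduct (τ : ℂ) :
    ModularForm.eta τ = cexp (π * I * τ / 12) * eulerProduct τ := by
  rw [ModularForm.eta, eulerProduct]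
  congr 1
  · rw [Function.Periodic.qParam]
    push_cast
    ring_nf
  · refine tprod_congr fun n ↦ ?_
    rw [ModularForm.eta_q_eq_cexp]
    ring_nf

/-- The modular transformation of the Euler product under `τ ↦ -1/τ`. -/
lemma eulerProduct_neg_one_div {τ : ℂ} (hτ : 0 < τ.im) :
    cexp (π * I * (-1 / τ) / 12) * eulerProduct (-1 / τ) =
      (-I * τ) ^ (1 / 2 : ℂ) * (cexp (π * I * τ / 12) * eulerProduct τ) := by
  have h := ModularForm.eta_comp_eq_csqrt_I_inv hτ
  simp only [Function.comp_apply, Pi.smul_apply, Pi.mul_apply, smul_eq_mul] at h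
  rw [← eta_eq_mul_eulerProduct, ← eta_eq_mul_eulerProduct, h, ← mul_assoc,
    sqrt_I_inv_mul_sqrt hτ]

/-- The modular transformation of the products in the quantum dilogarithm. -/
lemma modular_transformation_products {τ : ℂ} (hτ : 0 < τ.im) (u : ℂ) :
    (∏' n : ℕ, (1 - cexp (2 * π * I * (-u / τ + n * (-1 / τ))))) *
        (∏' n : ℕ, (1 - cexp (2 * π * I * (-1 / τ - -u / τ + n * (-1 / τ))))) =
      cexp (π * I * (u ^ 2 / τ - u / τ - u + 1 / 2 + (τ + 1 / τ) / 6)) *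
        ((∏' n : ℕ, (1 - cexp (2 * π * I * (u + n * τ)))) *
        ∏' n : ℕ, (1 - cexp (2 * π * I * (τ - u + n * τ)))) := by
  have hτ0 : τ ≠ 0 := by rintro rfl; simp at hτ
  have hτ' : 0 < (-1 / τ).im := by
    rw [neg_div, one_div, ← inv_neg]
    exact UpperHalfPlane.im_inv_neg_coe_pos ⟨τ, hτ⟩
  have hs : (-I * τ) ^ (1 / 2 : ℂ) ≠ 0 := by
    rw [Ne, cpow_eq_zero_iff]
    simp [hτ0]
  have h := jacobiTheta₂_eq_triple_product hτ u
  have h' := jacobiTheta₂_eq_triple_product hτ' (-u / τ)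
  have hE := eulerProduct_neg_one_div hτ
  have hfe := jacobiTheta₂_functional_equation (u + 1 / 2 - τ / 2) τ
  rw [← jacobiTheta₂_neg_left, show -(-u / τ + 1 / 2 - -1 / τ / 2) =
    (u + 1 / 2 - τ / 2) / τ + -1 / τ by field_simp; ring, jacobiTheta₂_add_left'] at h'
  rw [mul_assoc, div_mul_eq_mul_div, one_mul, eq_div_iff hs] at hfe
  have hK : cexp (π * I * (u ^ 2 / τ - u / τ - u + 1 / 2 + (τ + 1 / τ) / 6)) *
      cexp (-π * I * (u + 1 / 2 - τ / 2) ^ 2 / τ) * cexp (π * I * τ / 12) =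
      cexp (-π * I * (-1 / τ + 2 * ((u + 1 / 2 - τ / 2) / τ))) *
        cexp (π * I * (-1 / τ) / 12) := by
    simp only [← Complex.exp_add]
    congr 1
    field_simp
    ring
  rw [h] at hfe
  refine mul_left_cancel₀ (mul_ne_zero (mul_ne_zero (mul_ne_zero (eulerProduct_ne_zero hτ) hs)
    (Complex.exp_ne_zero (π * I * τ / 12)))
    (Complex.exp_ne_zero (-π * I * (u + 1 / 2 - τ / 2) ^ 2 / τ))) ?_
  generalize (-I * τ) ^ (1 / 2 : ℂ) = s at *
  generalize cexp (-π * I * (u + 1 / 2 - τ / 2) ^ 2 / τ) = B at *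
  generalize cexp (-π * I * (-1 / τ + 2 * ((u + 1 / 2 - τ / 2) / τ))) = A at *
  generalize jacobiTheta₂ ((u + 1 / 2 - τ / 2) / τ) (-1 / τ) = θ at *
  set p₁ := ∏' n : ℕ, (1 - cexp (2 * π * I * (-u / τ + n * (-1 / τ))))
  set p₂ := ∏' n : ℕ, (1 - cexp (2 * π * I * (-1 / τ - -u / τ + n * (-1 / τ))))
  set r₁ := ∏' n : ℕ, (1 - cexp (2 * π * I * (u + n * τ)))
  set r₂ := ∏' n : ℕ, (1 - cexp (2 * π * I * (τ - u + n * τ)))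
  linear_combination (-B * (p₁ * p₂)) * hE - B * cexp (π * I * (-1 / τ) / 12) * h' -
    A * cexp (π * I * (-1 / τ) / 12) * hfe - s * eulerProduct τ * (r₁ * r₂) * hK

end QuantumDilogarithm

open QuantumDilogarithm

/-- Reflection property `G_b(x) G_b(Q − x) = e^{πi x(x−Q)}` with `Q = b + b⁻¹`, for `Im(b²) > 0`,
at every `x` where both factors are defined. -/
theorem stmt6 (b : ℂ) (hb : 0 < (b ^ 2).im) (x : ℂ)
    (hx : ∀ n : ℕ, 1 - Complex.exp (2 * Real.pi * Complex.I * b * (x + n * b)) ≠ 0)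
    (hQx : ∀ n : ℕ,
      1 - Complex.exp (2 * Real.pi * Complex.I * b * ((b + b⁻¹ - x) + n * b)) ≠ 0) :
    Gb b x * Gb b (b + b⁻¹ - x) =
      Complex.exp (Real.pi * Complex.I * x * (x - (b + b⁻¹))) := by
  have hb0 : b ≠ 0 := by rintro rfl; simp at hb
  have e₁ (n : ℕ) : cexp (2 * π * I * b * (x + n * b)) =
      cexp (2 * π * I * (b * x + n * b ^ 2)) := by ring_nf
  have e₂ (n : ℕ) : cexp (2 * π * I * b * ((b + b⁻¹ - x) + n * b)) =
      cexp (2 * π * I * (b ^ 2 - b * x + n * b ^ 2)) := by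
    rw [← Complex.exp_periodic (2 * π * I * (b ^ 2 - b * x + n * b ^ 2))]
    congr 1
    field_simp
    ring
  have e₃ (n : ℕ) : cexp (2 * π * I * b⁻¹ * (x - (n + 1) * b⁻¹)) =
      cexp (2 * π * I * (-1 / b ^ 2 - -(b * x) / b ^ 2 + n * (-1 / b ^ 2))) := by
    congr 1
    field_simp
    ring
  have e₄ (n : ℕ) : cexp (2 * π * I * b⁻¹ * ((b + b⁻¹ - x) - (n + 1) * b⁻¹)) =
      cexp (2 * π * I * (-(b * x) / b ^ 2 + n * (-1 / b ^ 2))) := by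
    rw [← Complex.exp_periodic (2 * π * I * (-(b * x) / b ^ 2 + n * (-1 / b ^ 2)))]
    congr 1
    field_simp
    ring
  simp only [e₁] at hx
  simp only [e₂] at hQx
  have hD₁ := tprod_one_sub_cexp_ne_zero hb hx
  have hD₂ := tprod_one_sub_cexp_ne_zero hb hQx
  have hmod := modular_transformation_products hb (b * x)
  have hzeta : zetaBar b * zetaBar b * cexp (π * I * ((b * x) ^ 2 / b ^ 2 - b * x / b ^ 2 - b * x +
      1 / 2 + (b ^ 2 + 1 / b ^ 2) / 6)) = cexp (π * I * x * (x - (b + b⁻¹))) := by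
    simp only [zetaBar, ← Complex.exp_add]
    congr 1
    field_simp
    ring
  simp only [Gb, e₁, e₂, e₃, e₄]
  rw [div_mul_div_comm, div_eq_iff (mul_ne_zero hD₁ hD₂), ← hzeta]
  linear_combination zetaBar b * zetaBar b * hmod
end
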